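/- arXiv:0709.1611 — 5 statements merged into one kernel-verified Lean document; each statement's English description precedes it below -/
import Mathlib

section
/- Let Δ(z) = q·Π_{m≥1}(1−q^m)^{24} with q = e^{2πiz}, considered as a holomorphic function on the upper half-plane ℍ. Then for all z ∈ ℍ, Δ(−1/z) = z^{12}·Δ(z). -/
open UpperHalfPlane Complex Real

/-- The discriminant function `Δ(z) = q·Π_{m≥1} (1 - qᵐ)²⁴`, `q = e^{2πiz}`,
as a function on the upper half-plane. -/
noncomputable def Delta (z : UpperHalfPlane) : ℂ :=
  Complex.exp (2 * π * Complex.I * (z : ℂ)) *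
    ∏' m : ℕ, (1 - Complex.exp (2 * π * Complex.I * (z : ℂ)) ^ (m + 1)) ^ 24

theorem Delta_eq_discriminant (z : UpperHalfPlane) :
    Delta z = ModularForm.discriminant z := by
  rw [ModularForm.discriminant_eq_q_prod]
  simp [Delta, ModularForm.eta_q, Function.Periodic.qParam]

/-- `Δ(-1/z) = z¹² Δ(z)` for all `z` in the upper half-plane. -/
theorem Delta_S_transform (z w : UpperHalfPlane) (hw : (w : ℂ) = -1 / (z : ℂ)) :
    Delta w = (z : ℂ) ^ 12 * Delta z := by
  have hz : (z : ℂ) ≠ 0 := UpperHalfPlane.ne_zero z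
  have h := congrFun ModularForm.discriminant_S_invariant z
  rw [ModularForm.SL_slash_apply, ModularGroup.denom_S] at h
  have hS : ModularGroup.S • z = w := by
    rw [UpperHalfPlane.modular_S_smul]
    apply UpperHalfPlane.ext
    rw [hw]
    simp [neg_div, inv_neg]
  rw [hS] at h
  rw [Delta_eq_discriminant, Delta_eq_discriminant, ← h, zpow_neg, mul_comm, mul_assoc]
  have h12 : ((z : ℂ) ^ (12 : ℤ)) = (z : ℂ) ^ 12 := by norm_cast
  rw [h12, inv_mul_cancel₀ (pow_ne_zero _ hz), mul_one]
end

section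
/- (Valence formula.) Let f be a nonzero meromorphic modular function of weight k for Γ(1) = SL(2,ℤ), i.e., a meromorphic function on ℍ satisfying f((az+b)/(cz+d)) = (cz+d)^k f(z) for all [[a,b],[c,d]] ∈ SL(2,ℤ), and meromorphic at infinity in the variable q = e^{2πiz}. Then v_∞(f) + (1/2)·v_i(f) + (1/3)·v_ρ(f) + Σ*′_{p} v_p(f) = k/12, where the sum Σ*′ runs over a set of representatives of the orbits of SL(2,ℤ) on ℍ other than the orbits of i and of ρ = e^{2πi/3}, v_p(f) denotes the order of f at the point p ∈ ℍ, and v_∞(f) denotes the order at q = 0 of the function f̃(q) = f(z). -/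
open Complex Real Filter
open scoped MatrixGroups Topology

/-- The open upper half-plane, as a subset of `ℂ`. -/
def upperH : Set ℂ := {z | 0 < z.im}

namespace Val
open UpperHalfPlane ModularForm EisensteinSeries Derivative
open scoped Manifold
noncomputable section

/-- constructor for level one forms -/
lemma mkForm {k : ℤ} (F : ℍ → ℂ) (haut : ∀ (γ : SL(2, ℤ)), F ∣[k] γ = F)
    (hd : MDiff F) (hb : IsBoundedAtImInfty F) : ∃ G : ModularForm 𝒮ℒ k, ⇑G = F :=
  ⟨{ toFun := F
     slash_action_eq' := fun _ ⟨γ, hγ⟩ ↦ hγ ▸ haut γ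
     holo' := hd
     bdd_at_cusps' := fun {c} hc => by
        rw [Subgroup.IsArithmetic.isCusp_iff_isCusp_SL2Z] at hc
        rw [OnePoint.isBoundedAt_iff_forall_SL2Z hc]
        intro γ _
        rw [haut γ]; exact hb }, rfl⟩

lemma aut {k : ℤ} (F : ModularForm 𝒮ℒ k) (γ : SL(2, ℤ)) (z : ℍ) :
    F (γ • z) = (denom γ z) ^ k * F z :=
  SlashInvariantForm.slash_action_eqn'' F (Γ := 𝒮ℒ) (γ := (γ : GL (Fin 2) ℝ)) ⟨γ, rfl⟩ z

lemma slash_eq {k : ℤ} (F : ModularForm 𝒮ℒ k) (γ : SL(2, ℤ)) : ⇑F ∣[k] γ = F :=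
  SlashInvariantForm.slash_action_eqn F (γ := (γ : GL (Fin 2) ℝ)) ⟨γ, rfl⟩

lemma slash_of_aut {k : ℤ} (F : ℍ → ℂ) (γ : SL(2, ℤ))
    (h : ∀ z, F (γ • z) = (denom γ z) ^ k * F z) : F ∣[k] γ = F := by
  ext z
  rw [SL_slash_apply, h, zpow_neg]
  have := denom_ne_zero γ z
  field_simp

lemma E4_rho : E₄ ρ = 0 := by
  have h := aut E₄ (ModularGroup.S * ModularGroup.T) ρ
  have h2 : (ModularGroup.S * ModularGroup.T) • ρ = ρ := by
    rw [ModularGroup.stabilizer_ρ]; simp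
  rw [h2, ModularGroup.denom_apply] at h
  have h10 : (ModularGroup.S * ModularGroup.T) 1 0 = 1 := by decide
  have h11 : (ModularGroup.S * ModularGroup.T) 1 1 = 1 := by decide
  rw [h10, h11] at h
  have h3 : ((((1:ℤ):ℂ)) * (ρ:ℂ) + ((1:ℤ):ℂ)) ^ (4:ℤ) = -ρ - 1 := by
    rw [zpow_ofNat]
    have := ρ_sq
    push_cast
    rw [one_mul, show ((ρ:ℂ)+1)^4 = (ρ ^ 2 + 2 * ρ + 1)^2 by ring, this]
    ring_nf
    rw [this]; ring
  rw [h3] at h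
  have h4 : ((ρ : ℂ) + 2) * E₄ ρ = 0 := by linear_combination h
  rcases mul_eq_zero.mp h4 with h5 | h5
  · have := congrArg Complex.im h5
    have h6 := ρ.im_pos
    simp at this
    exact absurd this h6.ne'
  · exact h5

lemma E6_I : E₆ UpperHalfPlane.I = 0 := by
  have h := aut E₆ (ModularGroup.S) UpperHalfPlane.I
  have h2 : ModularGroup.S • UpperHalfPlane.I = UpperHalfPlane.I := by
    rw [ModularGroup.stabilizer_I]; simp
  rw [h2, ModularGroup.denom_apply] at h
  have h10 : (ModularGroup.S) 1 0 = 1 := by decide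
  have h11 : (ModularGroup.S) 1 1 = 0 := by decide
  rw [h10, h11] at h
  have h3 : ((((1:ℤ):ℂ)) * (UpperHalfPlane.I:ℂ) + ((0:ℤ):ℂ)) ^ (6:ℤ) = -1 := by
    rw [zpow_ofNat]
    rw [show (6:ℕ) = 2 * 3 by norm_num, pow_mul]
    norm_num
  rw [h3] at h
  linear_combination h / 2

lemma tendsto_inf {k : ℤ} (F : ModularForm 𝒮ℒ k) :
    Tendsto F atImInfty (𝓝 (cuspFunction 1 F 0)) := by
  have h := (ModularFormClass.analyticAt_cuspFunction_zero F one_pos one_mem_strictPeriods_SL)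
  have h2 := h.continuousAt.tendsto.comp (qParam_tendsto_atImInfty one_pos)
  refine h2.congr fun z => ?_
  exact SlashInvariantFormClass.eq_cuspFunction F z one_mem_strictPeriods_SL one_ne_zero

lemma D_zero {k : ℤ} (F : ModularForm 𝒮ℒ k) : IsZeroAtImInfty (D F) := by
  have h1 := tendsto_inf F
  set c := cuspFunction 1 F 0
  rw [isZeroAtImInfty_iff]
  intro ε hε
  have h2 := h1.eventually (Metric.closedBall_mem_nhds c hε)
  rw [Filter.Eventually, atImInfty_mem] at h2
  obtain ⟨A, hA⟩ := h2
  refine ⟨max A 1 + 1, fun z hz => ?_⟩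
  have hz1 : A + 1 ≤ z.im := le_trans (by gcongr; exact le_max_left _ _) hz
  have hz2 : 1 + 1 ≤ z.im := le_trans (by gcongr; exact le_max_right _ _) hz
  have him : ∀ w ∈ Metric.closedBall (z : ℂ) 1, z.im - 1 ≤ w.im := by
    intro w hw
    have : |(w - z).im| ≤ 1 := (Complex.abs_im_le_norm _).trans (by simpa [dist_eq_norm] using hw)
    rw [abs_le] at this
    have := this.1
    simp at this
    linarith
  have hd : DiffContOnCl ℂ (fun w => (F ∘ ofComplex) w - c) (Metric.ball (z : ℂ) 1) := by
    apply DifferentiableOn.diffContOnCl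
    rw [closure_ball _ one_ne_zero]
    refine DifferentiableOn.sub_const ?_ _
    refine (UpperHalfPlane.mdifferentiable_iff.mp F.holo').mono ?_
    intro w hw
    have := him w hw
    show 0 < w.im
    linarith
  have := Complex.norm_deriv_le_of_forall_mem_sphere_norm_le (C := ε) one_pos hd (by
    intro w hw
    have h3 := him w (Metric.sphere_subset_closedBall hw)
    have h4 : 0 < w.im := by linarith
    have := hA ⟨w, h4⟩ (by show A ≤ w.im; linarith)
    simpa [dist_eq_norm, ofComplex_apply_of_im_pos h4] using this)
  rw [normalizedDerivOfComplex, norm_mul]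
  rw [deriv_sub_const, div_one] at this
  have h5 : ‖(2 * (π:ℂ) * Complex.I)⁻¹‖ ≤ 1 := by
    rw [norm_inv]
    apply inv_le_one_of_one_le₀
    simp [abs_of_pos Real.pi_pos]
    linarith [Real.pi_gt_three]
  calc _ ≤ 1 * ε := by gcongr
    _ = ε := one_mul _

/-- The Rankin-Cohen bracket of `E₄` and `E₆`. -/
def RC : ℍ → ℂ := fun z => 4 * E₄ z * D E₆ z - 6 * E₆ z * D E₄ z

lemma D_aut {k : ℤ} (F : ModularForm 𝒮ℒ k) (γ : SL(2,ℤ)) (z : ℍ) :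
    D F (γ • z) = denom γ z ^ (k+2) * (D F z + (k : ℂ) * (2 * π * Complex.I)⁻¹ * (γ 1 0 / denom γ z) * F z) := by
  have h := congrFun (normalizedDerivOfComplex_SL_slash (k := k) (F.holo') (γ := γ)) z
  simp only [Pi.sub_apply] at h
  rw [show ⇑F.toSlashInvariantForm = ⇑F from rfl, slash_eq F γ, SL_slash_apply] at h
  rw [h, zpow_neg]
  have := denom_ne_zero γ z
  have := zpow_ne_zero (k+2) this
  field_simp
  ring

lemma RC_eq : ∃ c : ℂ, ∀ z, RC z = c * discriminant z := by
  have hb : IsZeroAtImInfty RC := by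
    have h1 := (((tendsto_inf E₄).const_mul 4).mul (D_zero E₆)).sub
      (((tendsto_inf E₆).const_mul 6).mul (D_zero E₄))
    simpa [IsZeroAtImInfty, ZeroAtFilter, RC] using! h1
  obtain ⟨G, hG⟩ := mkForm (k := 12) RC (fun γ => slash_of_aut _ _ fun z => by
    simp only [RC, D_aut, aut]
    have := denom_ne_zero γ z
    rw [show (12:ℤ) = 4 + 6 + 2 by norm_num]
    simp only [zpow_add₀ this]
    push_cast
    ring) (by
    have h4 := E₄.holo'
    have h6 := E₆.holo'
    have d4 := normalizedDerivOfComplex_mdifferentiable h4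
    have d6 := normalizedDerivOfComplex_mdifferentiable h6
    exact ((mdifferentiable_const.mul h4).mul d6).sub ((mdifferentiable_const.mul h6).mul d4)) hb.isBoundedAtImInfty
  have h0 : (qExpansion 1 G).coeff 0 = 0 := by
    have : cuspFunction 1 G 0 = 0 := by
      rw [hG]; exact hb.cuspFunction_apply_zero one_pos
    simpa [qExpansion_coeff] using this
  obtain ⟨c, hc⟩ := CuspForm.exists_smul_discriminant_of_weight_eq_twelve (ModularForm.toCuspForm G h0)
  refine ⟨c, fun z => ?_⟩
  have := congrArg (fun f : CuspForm 𝒮ℒ 12 => f z) hc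
  rw [← hG]
  simpa using! this.symm

end
end Val

namespace Val
open UpperHalfPlane ModularForm EisensteinSeries Derivative
open scoped Manifold
noncomputable section

lemma hasDeriv {k : ℤ} (F : ModularForm 𝒮ℒ k) (z : ℍ) :
    HasDerivAt (fun w : ℂ => F (ofComplex w)) (2 * π * Complex.I * D F z) z := by
  have h : DifferentiableAt ℂ (F ∘ ofComplex) z := UpperHalfPlane.mdifferentiableAt_iff.mp (F.holo' z)
  have h2 := h.hasDerivAt
  convert! h2 using 1
  rw [normalizedDerivOfComplex]
  have : (2 * (π:ℂ) * Complex.I) ≠ 0 := Complex.two_pi_I_ne_zero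
  field_simp

/-- The `j`-invariant. -/
def jj (z : ℍ) : ℂ := E₄ z ^ 3 / discriminant z

lemma disc_eq (z : ℍ) : E₄ z ^ 3 - E₆ z ^ 2 = 1728 * discriminant z := by
  rw [discriminant_eq_E₄_cube_sub_E₆_sq]; ring

lemma jj_smul (γ : SL(2, ℤ)) (z : ℍ) : jj (γ • z) = jj z := by
  have h4 := aut E₄ γ z
  have h12 : discriminant (γ • z) = denom γ z ^ (12:ℤ) * discriminant z := by
    have h6 := aut E₆ γ z
    have h := disc_eq z
    have h' := disc_eq (γ • z)
    rw [h4, h6] at h'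
    rw [zpow_ofNat] at h' ⊢
    rw [zpow_ofNat] at h'
    linear_combination (-1/1728) * h' + (1/1728) * denom γ z ^ 12 * h
  have := denom_ne_zero γ z
  have := discriminant_ne_zero z
  rw [jj, jj, h4, h12, zpow_ofNat, zpow_ofNat]
  field_simp

lemma hasDeriv_jj (z : ℍ) :
    HasDerivAt (fun w : ℂ => jj (ofComplex w))
      (2 * π * Complex.I * (E₄ z ^ 2 * E₆ z * RC z / (2 * 1728 * discriminant z ^ 2))) z := by
  have h4 := hasDeriv E₄ z
  have h6 := hasDeriv E₆ z
  have hD : HasDerivAt (fun w : ℂ => (E₄ (ofComplex w) ^ 3 - E₆ (ofComplex w) ^ 2) / 1728) _ z :=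
    ((h4.pow 3).sub (h6.pow 2)).div_const 1728
  have e : (fun w : ℂ => jj (ofComplex w)) = fun w : ℂ => E₄ (ofComplex w) ^ 3 /
    ((E₄ (ofComplex w) ^ 3 - E₆ (ofComplex w) ^ 2) / 1728) := by
    ext w; rw [jj, discriminant_eq_E₄_cube_sub_E₆_sq]
  rw [e]
  have hne := discriminant_ne_zero z
  have hne' := hne
  rw [discriminant_eq_E₄_cube_sub_E₆_sq] at hne'
  have hz : ofComplex (z : ℂ) = z := ofComplex_apply z
  have := (h4.pow 3).div hD (by rw [hz]; exact hne')
  convert! this using 1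
  have hd := disc_eq z
  simp only [hz, Pi.pow_apply]
  rw [hd, RC]
  field_simp
  norm_num
  linear_combination (6 * E₄ z ^ 2 * D E₄ z) * hd

lemma jj_rho : jj ρ = 0 := by rw [jj, E4_rho]; simp
lemma jj_I : jj UpperHalfPlane.I = 1728 := by
  have h := disc_eq UpperHalfPlane.I
  rw [E6_I] at h
  rw [jj, div_eq_iff (discriminant_ne_zero _), ← h]; ring

lemma jj_diff : DifferentiableOn ℂ (fun w : ℂ => jj (ofComplex w)) upperHalfPlaneSet := by
  intro w hw
  exact (hasDeriv_jj ⟨w, hw⟩).differentiableAt.differentiableWithinAt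

lemma jj_cont : Continuous jj := by
  have : Continuous fun z : ℍ => jj (ofComplex (z : ℂ)) := by
    rw [← continuousOn_univ]
    exact jj_diff.continuousOn.comp continuous_coe.continuousOn (fun z _ => z.2)
  simpa using this

lemma preconn : IsPreconnected (upperHalfPlaneSet) :=
  (convex_halfSpace_im_gt 0).isPreconnected

lemma RC_const : ∃ c : ℂ, c ≠ 0 ∧ ∀ z, RC z = c * discriminant z := by
  obtain ⟨c, hc⟩ := RC_eq
  refine ⟨c, ?_, hc⟩
  rintro rfl
  have := isOpen_upperHalfPlaneSet.is_const_of_deriv_eq_zero preconn jj_diff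
    (fun w hw => by
      have := (hasDeriv_jj ⟨w, hw⟩).deriv
      rw [hc] at this
      simpa using! this) ρ.2 (UpperHalfPlane.I).2
  simp only [ofComplex_apply, jj_rho, jj_I] at this
  norm_num at this

lemma RC_ne (z : ℍ) : RC z ≠ 0 := by
  obtain ⟨c, h, hc⟩ := RC_const
  rw [hc]
  exact mul_ne_zero h (discriminant_ne_zero z)

lemma E4_simple (z : ℍ) (h : E₄ z = 0) : D E₄ z ≠ 0 := by
  intro h2
  apply RC_ne z
  rw [RC, h, h2]; ring

lemma E6_simple (z : ℍ) (h : E₆ z = 0) : D E₆ z ≠ 0 := by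
  intro h2
  apply RC_ne z
  rw [RC, h, h2]; ring

lemma jj_eq_zero (z : ℍ) : jj z = 0 ↔ E₄ z = 0 := by
  rw [jj]
  simp [discriminant_ne_zero]

lemma jj_eq_1728 (z : ℍ) : jj z = 1728 ↔ E₆ z = 0 := by
  rw [jj, div_eq_iff (discriminant_ne_zero _), ← disc_eq]
  constructor
  · intro h
    have : E₆ z ^ 2 = 0 := by linear_combination h
    simpa using this
  · intro h
    rw [h]; ring

lemma jj_deriv_ne (z : ℍ) (h0 : jj z ≠ 0) (h1 : jj z ≠ 1728) :
    deriv (fun w : ℂ => jj (ofComplex w)) z ≠ 0 := by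
  rw [(hasDeriv_jj z).deriv]
  have a := RC_ne z
  have b := discriminant_ne_zero z
  rw [Ne, jj_eq_zero] at h0
  rw [Ne, jj_eq_1728] at h1
  have : (2 * (π:ℂ) * Complex.I) ≠ 0 := Complex.two_pi_I_ne_zero
  exact mul_ne_zero this (div_ne_zero (mul_ne_zero (mul_ne_zero (pow_ne_zero _ h0) h1) a)
    (mul_ne_zero (by norm_num) (pow_ne_zero _ b)))

lemma jj_analytic : AnalyticOnNhd ℂ (fun w : ℂ => jj (ofComplex w)) upperHalfPlaneSet :=
  jj_diff.analyticOnNhd isOpen_upperHalfPlaneSet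

lemma jj_locinj (z : ℍ) (h0 : jj z ≠ 0) (h1 : jj z ≠ 1728) :
    ∃ U ∈ 𝓝 z, Set.InjOn jj U := by
  have h := (jj_analytic z z.2).hasStrictDerivAt
  have h2 := h.eventually_left_inverse (jj_deriv_ne z h0 h1)
  have h3 := continuous_coe.continuousAt.tendsto.eventually h2
  refine ⟨_, h3, fun x hx y hy hxy => ?_⟩
  simp only [Set.mem_setOf_eq, ofComplex_apply] at hx hy
  apply UpperHalfPlane.ext
  rw [← hx, ← hy, hxy]

lemma jj_open (z : ℍ) : 𝓝 (jj z) ≤ map jj (𝓝 z) := by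
  rcases (jj_analytic z z.2).eventually_constant_or_nhds_le_map_nhds with h | h
  · exfalso
    have := jj_analytic.eqOn_of_preconnected_of_eventuallyEq (analyticOnNhd_const (v := jj (ofComplex (z:ℂ)))) preconn z.2 h
    have a := this ρ.2
    have b := this (UpperHalfPlane.I).2
    simp only [ofComplex_apply, jj_rho, jj_I] at a b
    rw [← a] at b
    norm_num at b
  · simp only [ofComplex_apply] at h
    refine h.trans ?_
    rw [show map (fun w : ℂ => jj (ofComplex w)) (𝓝 (z:ℂ)) = map jj (map ofComplex (𝓝 (z:ℂ))) by rw [Filter.map_map]; rfl]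
    apply Filter.map_mono
    have := (mdifferentiableAt_ofComplex z.2).continuousAt.tendsto
    simpa using! this

end
end Val

namespace Val
open UpperHalfPlane ModularForm EisensteinSeries Derivative
open scoped Manifold
noncomputable section

/-- equivalence under the modular group -/
def Eqv (z w : ℍ) : Prop := ∃ γ : SL(2, ℤ), γ • z = w

lemma Eqv.refl (z : ℍ) : Eqv z z := ⟨1, one_smul _ _⟩
lemma Eqv.symm {z w : ℍ} (h : Eqv z w) : Eqv w z := by
  obtain ⟨γ, rfl⟩ := h
  exact ⟨γ⁻¹, inv_smul_smul _ _⟩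
lemma Eqv.trans {x y z : ℍ} (h : Eqv x y) (h' : Eqv y z) : Eqv x z := by
  obtain ⟨γ, rfl⟩ := h
  obtain ⟨δ, rfl⟩ := h'
  exact ⟨δ * γ, mul_smul _ _ _⟩

lemma Eqv.jj {z w : ℍ} (h : Eqv z w) : jj z = jj w := by
  obtain ⟨γ, rfl⟩ := h
  exact (jj_smul _ _).symm

lemma eqv_iff (z w : ℍ) : Eqv z w ↔
    (Quotient.mk (MulAction.orbitRel 𝒮ℒ ℍ) z) = Quotient.mk (MulAction.orbitRel 𝒮ℒ ℍ) w := by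
  rw [Quotient.eq, MulAction.orbitRel_apply, MulAction.mem_orbit_iff]
  constructor
  · intro h
    obtain ⟨γ, rfl⟩ := h.symm
    exact ⟨⟨(γ : GL (Fin 2) ℝ), ⟨γ, rfl⟩⟩, rfl⟩
  · rintro ⟨⟨_, ⟨γ, rfl⟩⟩, h⟩
    exact Eqv.symm ⟨γ, h⟩

lemma sep (z w : ℍ) (h : ¬ Eqv z w) : ∃ U ∈ 𝓝 z, ∃ V ∈ 𝓝 w, ∀ x ∈ U, ∀ y ∈ V, ¬ Eqv x y := by
  rw [eqv_iff] at h
  obtain ⟨U, V, hU, hV, hzU, hwV, hd⟩ := t2_separation h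
  have hc : Continuous (Quotient.mk (MulAction.orbitRel 𝒮ℒ ℍ)) := continuous_quotient_mk'
  refine ⟨_, (hU.preimage hc).mem_nhds hzU, _, (hV.preimage hc).mem_nhds hwV, ?_⟩
  intro x hx y hy hxy
  rw [eqv_iff] at hxy
  exact Set.disjoint_left.mp hd hx (by rw [hxy]; exact hy)

/-- bad values -/
def Bad : Set ℂ := {c | ∃ z w, jj z = c ∧ jj w = c ∧ ¬ Eqv z w}

lemma bad_open : IsOpen Bad := by
  rw [isOpen_iff_mem_nhds]
  rintro c ⟨z, w, rfl, hw, hn⟩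
  obtain ⟨U, hU, V, hV, h⟩ := sep z w hn
  have h1 := jj_open z (image_mem_map hU)
  have h2 := jj_open w (image_mem_map hV)
  rw [hw] at h2
  filter_upwards [h1, h2]
  rintro c ⟨x, hx, rfl⟩ ⟨y, hy, hxy⟩
  exact ⟨x, y, rfl, hxy, h x hx y hy⟩

/-- `1/j` as a function of `q` -/
def invj (q : ℂ) : ℂ := cuspFunction 1 discriminant q / cuspFunction 1 E₄ q ^ 3

lemma cusp_E4 : cuspFunction 1 E₄ 0 = 1 := by
  have h := E_qExpansion_coeff_zero (k := 4) (by norm_num) (by decide)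
  simpa [qExpansion_coeff] using h

lemma cusp_E6 : cuspFunction 1 E₆ 0 = 1 := by
  have h := E_qExpansion_coeff_zero (k := 6) (by norm_num) (by decide)
  simpa [qExpansion_coeff] using h

lemma cusp_disc : cuspFunction 1 discriminant 0 = 0 := 
  discriminant_isZeroAtImInfty.cuspFunction_apply_zero one_pos

lemma cusp_disc_deriv : deriv (cuspFunction 1 discriminant) 0 = 1 := by
  have h := discriminant_qExpansion_coeff_one
  simpa [qExpansion_coeff] using! h

lemma an_disc : AnalyticAt ℂ (cuspFunction 1 discriminant) 0 :=
  ModularFormClass.analyticAt_cuspFunction_zero CuspForm.discriminant one_pos one_mem_strictPeriods_SL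

lemma an_form {k : ℤ} (F : ModularForm 𝒮ℒ k) : AnalyticAt ℂ (cuspFunction 1 F) 0 :=
  ModularFormClass.analyticAt_cuspFunction_zero F one_pos one_mem_strictPeriods_SL

lemma form_q {k : ℤ} (F : ModularForm 𝒮ℒ k) (z : ℍ) :
    cuspFunction 1 F (Function.Periodic.qParam 1 z) = F z :=
  SlashInvariantFormClass.eq_cuspFunction F z one_mem_strictPeriods_SL one_ne_zero

lemma disc_q (z : ℍ) :
    cuspFunction 1 discriminant (Function.Periodic.qParam 1 z) = discriminant z :=
  SlashInvariantFormClass.eq_cuspFunction CuspForm.discriminant z one_mem_strictPeriods_SL one_ne_zero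

lemma an_invj : AnalyticAt ℂ invj 0 :=
  an_disc.div ((an_form E₄).pow 3) (by simp [cusp_E4])

lemma invj_deriv : deriv invj 0 = 1 := by
  have h := an_disc.differentiableAt.hasDerivAt.div ((an_form E₄).differentiableAt.hasDerivAt.pow 3)
    (by simp [cusp_E4])
  have := h.deriv
  simpa [cusp_E4, cusp_disc, cusp_disc_deriv] using! this

lemma invj_q (z : ℍ) : invj (Function.Periodic.qParam 1 z) = (jj z)⁻¹ := by
  rw [invj, form_q, disc_q, jj, inv_div]

lemma jj_large : Tendsto jj atImInfty (Bornology.cobounded ℂ) := by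
  have h : Tendsto (fun z : ℍ => (jj z)⁻¹) atImInfty (𝓝 0) := by
    have := an_invj.continuousAt.tendsto.comp (qParam_tendsto_atImInfty one_pos)
    rw [show invj 0 = 0 by simp [invj, cusp_disc]] at this
    exact this.congr fun z => invj_q z
  have h4 : ∀ᶠ z in atImInfty, E₄ z ≠ 0 := by
    have := tendsto_inf E₄
    rw [cusp_E4] at this
    exact this.eventually_ne one_ne_zero
  have h2 : Tendsto (fun z : ℍ => (jj z)⁻¹) atImInfty (𝓝[≠] 0) := by
    rw [tendsto_nhdsWithin_iff]
    refine ⟨h, h4.mono fun z hz => ?_⟩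
    have := mt (jj_eq_zero z).mp hz
    simpa using this
  exact (tendsto_inv₀_nhdsNE_zero.comp h2).congr fun z => inv_inv _

lemma eqv_of_q {z w : ℍ} (h : Function.Periodic.qParam 1 z = Function.Periodic.qParam 1 w) :
    Eqv z w := by
  rw [Function.Periodic.qParam, Function.Periodic.qParam, Complex.exp_eq_exp_iff_exists_int] at h
  obtain ⟨n, hn⟩ := h
  apply Eqv.symm
  refine ⟨ModularGroup.T ^ n, ?_⟩
  rw [modular_T_zpow_smul]
  apply UpperHalfPlane.ext
  have : (2 * (π:ℂ) * Complex.I) ≠ 0 := Complex.two_pi_I_ne_zero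
  have h2 : (2 * (π:ℂ) * Complex.I) * z = (2 * (π:ℂ) * Complex.I) * (w + n) := by
    simp at hn
    linear_combination hn
  rw [mul_right_inj' this] at h2
  rw [h2]
  simp [add_comm]

lemma inj_cusp : ∃ A : ℝ, ∀ z w : ℍ, A ≤ z.im → A ≤ w.im → jj z = jj w → Eqv z w := by
  have h2 := an_invj.hasStrictDerivAt.eventually_left_inverse (by rw [invj_deriv]; exact one_ne_zero)
  have h3 := (qParam_tendsto_atImInfty one_pos).eventually h2
  rw [Filter.Eventually, atImInfty_mem] at h3
  obtain ⟨A, hA⟩ := h3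
  refine ⟨A, fun z w hz hw h => eqv_of_q ?_⟩
  have a := hA z hz
  have b := hA w hw
  simp only [Set.mem_ofPred_eq] at a b
  rw [← a, ← b, invj_q, invj_q, h]

lemma bad_rep {c : ℂ} (hc : c ∈ Bad) : ∃ z ∈ ModularGroup.fd, ∃ w ∈ ModularGroup.fd,
    jj z = c ∧ jj w = c ∧ ¬ Eqv z w := by
  obtain ⟨z, w, rfl, h, hn⟩ := hc
  obtain ⟨γ, hγ⟩ := ModularGroup.exists_smul_mem_fd z
  obtain ⟨δ, hδ⟩ := ModularGroup.exists_smul_mem_fd w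
  refine ⟨_, hγ, _, hδ, jj_smul _ _, by rw [jj_smul, h], fun h => hn ?_⟩
  exact Eqv.trans ⟨γ, rfl⟩ (h.trans (Eqv.symm ⟨δ, rfl⟩))

lemma bad_bdd : ∃ M : ℝ, ∀ c ∈ Bad, ‖c‖ ≤ M := by
  obtain ⟨A, hA⟩ := inj_cusp
  obtain ⟨M, hM⟩ := (ModularGroup.isCompact_truncatedFundamentalDomain A).exists_bound_of_continuousOn
    jj_cont.continuousOn
  refine ⟨M, fun c hc => ?_⟩
  obtain ⟨z, hz, w, hw, rfl, h, hn⟩ := bad_rep hc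
  by_contra hlt
  have key : ∀ x ∈ ModularGroup.fd, jj x = jj z → A ≤ x.im := by
    intro x hx h
    by_contra hx2
    exact hlt (by rw [← h]; exact hM x ⟨hx, (not_le.mp hx2).le⟩)
  exact hn (hA z w (key z hz rfl) (key w hw h) h.symm)

lemma low (B : ℝ) : ∃ A : ℝ, ∀ z : ℍ, ‖jj z‖ ≤ B → z.im ≤ A := by
  have := tendsto_norm_cobounded_atTop.comp jj_large
  have := this.eventually (eventually_gt_atTop B)
  rw [Filter.Eventually, atImInfty_mem] at this
  obtain ⟨A, hA⟩ := this
  refine ⟨A, fun z hz => ?_⟩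
  by_contra h
  have := hA z (not_le.mp h).le
  exact absurd this (not_lt.mpr hz)

lemma bad_closed {c : ℂ} (hc : c ∈ closure Bad) (h0 : c ≠ 0) (h1 : c ≠ 1728) : c ∈ Bad := by
  obtain ⟨u, hu, hlim⟩ := mem_closure_iff_seq_limit.mp hc
  choose z hz w hw hzj hwj hn using fun n => bad_rep (hu n)
  obtain ⟨B, hB⟩ := (Metric.isBounded_range_of_tendsto u hlim).exists_norm_le
  obtain ⟨A, hA⟩ := low B
  have hB' : ∀ n, ‖u n‖ ≤ B := fun n => hB _ ⟨n, rfl⟩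
  have hK := ModularGroup.isCompact_truncatedFundamentalDomain A
  obtain ⟨⟨x, y⟩, hxy, φ, hφ, hl⟩ := (hK.prod hK).tendsto_subseq (x := fun n => (z n, w n)) (fun n =>
    ⟨⟨hz n, hA _ (by rw [hzj]; exact hB' n)⟩, ⟨hw n, hA _ (by rw [hwj]; exact hB' n)⟩⟩)
  rw [Prod.tendsto_iff] at hl
  obtain ⟨hx, hy⟩ := hl
  have hu' := hlim.comp hφ.tendsto_atTop
  have ex : jj x = c := by
    refine tendsto_nhds_unique ((jj_cont.tendsto x).comp hx) (hu'.congr fun n => ?_)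
    simp [hzj]
  have ey : jj y = c := by
    refine tendsto_nhds_unique ((jj_cont.tendsto y).comp hy) (hu'.congr fun n => ?_)
    simp [hwj]
  refine ⟨x, y, ex, ey, ?_⟩
  rintro ⟨γ, rfl⟩
  obtain ⟨U, hU, hi⟩ := jj_locinj (γ • x) (by rwa [ey]) (by rwa [ey])
  have hc : Continuous fun t : ℍ => γ • t := continuous_const_smul (γ : GL (Fin 2) ℝ)
  have e1 := ((hc.tendsto x).comp hx).eventually hU
  have e2 := hy.eventually hU
  obtain ⟨n, hn1, hn2⟩ := (e1.and e2).exists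
  exact hn (φ n) ⟨γ, hi hn1 hn2 (by
    simp only [Function.comp_apply]
    rw [jj_smul, hzj, hwj])⟩

theorem jj_inj {z w : ℍ} (h : jj z = jj w) : Eqv z w := by
  by_contra hn
  have hb : jj w ∈ Bad := ⟨z, w, h, rfl, hn⟩
  have hcount : ({0, 1728} : Set ℂ).Countable := (Set.toFinite _).countable
  have hX : IsPreconnected ({0, 1728} : Set ℂ)ᶜ :=
    (hcount.isPathConnected_compl_of_one_lt_rank (by rw [rank_real_complex]; norm_num)).isConnected.isPreconnected
  have hne : (({0, 1728} : Set ℂ)ᶜ ∩ Bad).Nonempty := 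
    (Set.Countable.dense_compl ℝ hcount).inter_open_nonempty Bad bad_open ⟨_, hb⟩ |>.mono
      (fun x hx => ⟨hx.2, hx.1⟩)
  have hsub := hX.subset_of_closure_inter_subset bad_open hne (by
    rintro c ⟨hc, hc2⟩
    simp at hc2
    exact bad_closed hc hc2.1 hc2.2)
  obtain ⟨M, hM⟩ := bad_bdd
  have : ((|M| + 1729 : ℝ) : ℂ) ∈ Bad := by
    apply hsub
    simp only [Set.mem_compl_iff, Set.mem_insert_iff, Set.mem_singleton_iff]
    rintro (h | h)
    · have h : |M| + 1729 = 0 := by exact_mod_cast h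
      linarith [abs_nonneg M]
    · have h : |M| + 1729 = 1728 := by exact_mod_cast h
      linarith [abs_nonneg M]
  have := hM _ this
  rw [Complex.norm_real, Real.norm_eq_abs, abs_of_pos (by positivity)] at this
  linarith [le_abs_self M]

end
end Val

namespace Val
open UpperHalfPlane ModularForm EisensteinSeries Derivative
open scoped Manifold
noncomputable section

/-- the nome -/
def nq (z : ℂ) : ℂ := Function.Periodic.qParam 1 z

lemma nq_ne (z : ℂ) : nq z ≠ 0 := Function.Periodic.qParam_ne_zero z
lemma nq_an (z : ℂ) : AnalyticAt ℂ nq z := by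
  unfold nq Function.Periodic.qParam
  fun_prop
lemma nq_tendsto : Tendsto (fun z : ℍ => nq z) atImInfty (𝓝 0) := qParam_tendsto_atImInfty one_pos

/-- meromorphic modular function, with given orders. -/
structure MF (k : ℤ) (f : ℂ → ℂ) (v : ℍ → ℤ) (n : ℤ) : Prop where
  aut : ∀ (γ : SL(2, ℤ)) (z : ℍ), f ((γ • z : ℍ) : ℂ) = denom γ z ^ k * f z
  mer : ∀ p : ℍ, MeromorphicAt f p
  ord : ∀ p : ℍ, meromorphicOrderAt f p = v p
  cusp : ∃ h : ℂ → ℂ, AnalyticAt ℂ h 0 ∧ h 0 ≠ 0 ∧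
    ∀ᶠ z : ℍ in atImInfty, f z = nq z ^ n * h (nq z)

lemma MF.mul {k l : ℤ} {f g : ℂ → ℂ} {v w : ℍ → ℤ} {m n : ℤ} (hf : MF k f v m) (hg : MF l g w n) :
    MF (k + l) (f * g) (v + w) (m + n) where
  aut γ z := by
    simp only [Pi.mul_apply]
    rw [hf.aut, hg.aut, zpow_add₀ (denom_ne_zero γ z)]; ring
  mer p := (hf.mer p).mul (hg.mer p)
  ord p := by rw [meromorphicOrderAt_mul (hf.mer p) (hg.mer p), hf.ord, hg.ord]; simp
  cusp := by
    obtain ⟨h, h1, h2, h3⟩ := hf.cusp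
    obtain ⟨h', h1', h2', h3'⟩ := hg.cusp
    refine ⟨h * h', h1.mul h1', mul_ne_zero h2 h2', ?_⟩
    filter_upwards [h3, h3'] with z e1 e2
    simp only [Pi.mul_apply]
    rw [e1, e2, zpow_add₀ (nq_ne z)]; ring

lemma MF.zpow {k : ℤ} {f : ℂ → ℂ} {v : ℍ → ℤ} {m : ℤ} (hf : MF k f v m) (a : ℤ) :
    MF (a * k) (f ^ a) (fun p => a * v p) (a * m) where
  aut γ z := by
    simp only [Pi.pow_apply]
    rw [hf.aut, mul_zpow, ← zpow_mul, mul_comm k]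
  mer p := (hf.mer p).zpow a
  ord p := by rw [meromorphicOrderAt_zpow (hf.mer p), hf.ord]; simp
  cusp := by
    obtain ⟨h, h1, h2, h3⟩ := hf.cusp
    refine ⟨h ^ a, h1.zpow h2, zpow_ne_zero _ h2, ?_⟩
    filter_upwards [h3] with z e1
    simp only [Pi.pow_apply]
    rw [e1, mul_zpow, ← zpow_mul, mul_comm m]

lemma MF.one : MF 0 1 0 0 where
  aut γ z := by simp
  mer p := MeromorphicAt.const 1 _
  ord p := by
    have := meromorphicOrderAt_const (𝕜 := ℂ) (p : ℂ) (1:ℂ)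
    simpa using! this
  cusp := ⟨1, analyticAt_const, one_ne_zero, by simp⟩

lemma MF.prod {ι : Type*} (s : Finset ι) (k : ι → ℤ) (f : ι → ℂ → ℂ) (v : ι → ℍ → ℤ) (m : ι → ℤ)
    (h : ∀ i ∈ s, MF (k i) (f i) (v i) (m i)) :
    MF (∑ i ∈ s, k i) (∏ i ∈ s, f i) (∑ i ∈ s, v i) (∑ i ∈ s, m i) := by
  classical
  induction s using Finset.induction with
  | empty => simpa using MF.one
  | insert a s ha ih =>
    rw [Finset.sum_insert ha, Finset.sum_insert ha, Finset.sum_insert ha, Finset.prod_insert ha]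
    exact (h a (Finset.mem_insert_self _ _)).mul (ih fun i hi => h i (Finset.mem_insert_of_mem hi))

lemma ord_zero {g : ℂ → ℂ} {p : ℂ} (hg : AnalyticAt ℂ g p) (h : g p ≠ 0) :
    meromorphicOrderAt g p = 0 := by
  rw [hg.meromorphicOrderAt_eq, hg.analyticOrderAt_eq_zero.mpr h]; rfl

lemma ord_one {g : ℂ → ℂ} {p : ℂ} (hg : AnalyticAt ℂ g p) (h : g p = 0) (h' : deriv g p ≠ 0) :
    meromorphicOrderAt g p = 1 := by
  rw [hg.meromorphicOrderAt_eq, hg.analyticOrderAt_eq_one_of_zero_deriv_ne_zero h h']; rfl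

lemma form_an {k : ℤ} (F : ModularForm 𝒮ℒ k) (p : ℍ) :
    AnalyticAt ℂ (fun w : ℂ => F (ofComplex w)) p := by
  have : DifferentiableOn ℂ (fun w : ℂ => F (ofComplex w)) upperHalfPlaneSet := fun w hw =>
    (hasDeriv F ⟨w, hw⟩).differentiableAt.differentiableWithinAt
  exact this.analyticAt (isOpen_upperHalfPlaneSet.mem_nhds p.2)

open Classical in
lemma MF.form {k : ℤ} (F : ModularForm 𝒮ℒ k) (h0 : cuspFunction 1 F 0 ≠ 0)
    (hs : ∀ z, F z = 0 → D F z ≠ 0) :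
    MF k (fun w : ℂ => F (ofComplex w)) (fun z => if F z = 0 then 1 else 0) 0 where
  aut γ z := by rw [ofComplex_apply, ofComplex_apply, Val.aut]
  mer p := (form_an F p).meromorphicAt
  ord p := by
    split_ifs with h
    · refine ord_one (form_an F p) (by simpa using h) ?_
      rw [(hasDeriv F p).deriv]
      exact mul_ne_zero Complex.two_pi_I_ne_zero (hs p h)
    · exact ord_zero (form_an F p) (by simpa using h)
  cusp := ⟨cuspFunction 1 F, an_form F, h0, Eventually.of_forall fun z => by
    rw [nq, form_q, ofComplex_apply]; simp⟩

lemma disc_an (p : ℍ) : AnalyticAt ℂ (fun w : ℂ => discriminant (ofComplex w)) p := by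
  have e : (fun w : ℂ => discriminant (ofComplex w)) = fun w : ℂ =>
    ((E₄ (ofComplex w) ^ 3 - E₆ (ofComplex w) ^ 2) / 1728) := by
    ext w; rw [discriminant_eq_E₄_cube_sub_E₆_sq]
  rw [e]
  exact (((form_an E₄ p).pow 3).sub ((form_an E₆ p).pow 2)).div_const

lemma simple_zero {g : ℂ → ℂ} (hg : AnalyticAt ℂ g 0) (h : g 0 = 0) (h' : deriv g 0 ≠ 0) :
    ∃ u : ℂ → ℂ, AnalyticAt ℂ u 0 ∧ u 0 ≠ 0 ∧ ∀ᶠ w in 𝓝 0, g w = w * u w := by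
  have h1 := hg.analyticOrderAt_eq_one_of_zero_deriv_ne_zero h h'
  obtain ⟨u, a, b, c⟩ := (hg.analyticOrderAt_eq_natCast (n := 1)).mp (by simpa using h1)
  exact ⟨u, a, b, c.mono fun w hw => by simpa using hw⟩

lemma MF.disc : MF 12 (fun w : ℂ => discriminant (ofComplex w)) 0 1 where
  aut γ z := by
    rw [ofComplex_apply, ofComplex_apply]
    have h4 := Val.aut E₄ γ z
    have h6 := Val.aut E₆ γ z
    have h := disc_eq z
    have h' := disc_eq (γ • z)
    rw [h4, h6] at h'
    rw [zpow_ofNat] at h' ⊢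
    rw [zpow_ofNat] at h'
    linear_combination (-1/1728) * h' + (1/1728) * denom γ z ^ 12 * h
  mer p := (disc_an p).meromorphicAt
  ord p := ord_zero (disc_an p) (by simpa using discriminant_ne_zero p)
  cusp := by
    obtain ⟨u, a, b, c⟩ := simple_zero an_disc cusp_disc (by rw [cusp_disc_deriv]; exact one_ne_zero)
    refine ⟨u, a, b, (nq_tendsto.eventually c).mono fun z hz => ?_⟩
    rw [ofComplex_apply, zpow_one, ← hz, nq, disc_q]

open Classical in
lemma MF.jj (c : ℂ) (h0 : c ≠ 0) (h1 : c ≠ 1728) :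
    MF 0 (fun w : ℂ => jj (ofComplex w) - c) (fun z => if Val.jj z = c then 1 else 0) (-1) where
  aut γ z := by rw [ofComplex_apply, ofComplex_apply, jj_smul]; simp
  mer p := ((jj_analytic p p.2).sub analyticAt_const).meromorphicAt
  ord p := by
    have han := ((jj_analytic p p.2).sub (analyticAt_const (v := c)))
    split_ifs with h
    · refine ord_one han (by simpa [sub_eq_zero] using h) ?_
      have := jj_deriv_ne p (by rwa [h]) (by rwa [h])
      have e := deriv_sub_const (f := fun w : ℂ => Val.jj (ofComplex w)) (x := (p:ℂ)) c
      rw [← e] at this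
      exact this
    · exact ord_zero han (by simpa [sub_eq_zero] using h)
  cusp := by
    obtain ⟨u, a, b, e⟩ := simple_zero an_invj (by simp [invj, cusp_disc])
      (by rw [invj_deriv]; exact one_ne_zero)
    refine ⟨fun q => (1 - c * (q * u q)) / u q, ?_, ?_, ?_⟩
    · exact (analyticAt_const.sub (analyticAt_const.mul (analyticAt_id.mul a))).div a b
    · simpa using b
    · have hb := a.continuousAt.eventually_ne b
      filter_upwards [nq_tendsto.eventually e, nq_tendsto.eventually hb] with z hz hb
      rw [nq, invj_q, ← nq] at hz
      have h2 := nq_ne z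
      have h3 : Val.jj z = (nq z * u (nq z))⁻¹ := by rw [← hz, inv_inv]
      rw [ofComplex_apply, h3]
      field_simp

end
end Val

namespace Val
open UpperHalfPlane ModularForm EisensteinSeries Derivative
open scoped Manifold
noncomputable section

lemma ne_tendsto {X Y : Type*} [TopologicalSpace X] [TopologicalSpace Y] {g : X → Y}
    (hg : Continuous g) (hi : Function.Injective g) (x : X) :
    Tendsto g (𝓝[≠] x) (𝓝[≠] (g x)) := by
  rw [tendsto_nhdsWithin_iff]
  refine ⟨(hg.tendsto x).mono_left nhdsWithin_le_nhds, ?_⟩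
  filter_upwards [self_mem_nhdsWithin] with y hy h
  exact hy (hi h)

lemma coe_inj' : Function.Injective (fun z : ℍ => (z : ℂ)) := fun _ _ h => UpperHalfPlane.ext h

lemma MF.cusp_local {k : ℤ} {f : ℂ → ℂ} {v : ℍ → ℤ} {m : ℤ} (hf : MF k f v m) :
    ∃ h : ℂ → ℂ, AnalyticAt ℂ h 0 ∧ h 0 ≠ 0 ∧ ∃ A : ℝ, ∀ z : ℍ, A < z.im →
      AnalyticAt ℂ h (nq z) ∧ h (nq z) ≠ 0 ∧ ∀ᶠ w in 𝓝 (z : ℂ), f w = nq w ^ m * h (nq w) := by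
  obtain ⟨h, a, b, c⟩ := hf.cusp
  refine ⟨h, a, b, ?_⟩
  have e1 := nq_tendsto.eventually a.eventually_analyticAt
  have e2 := nq_tendsto.eventually (a.continuousAt.eventually_ne b)
  have e := (c.and (e1.and e2))
  rw [Filter.Eventually, atImInfty_mem] at e
  obtain ⟨A, hA⟩ := e
  refine ⟨A, fun z hz => ⟨(hA z hz.le).2.1, (hA z hz.le).2.2, ?_⟩⟩
  have o : IsOpen {w : ℂ | max A 0 < w.im} := isOpen_lt continuous_const Complex.continuous_im
  filter_upwards [o.mem_nhds (show max A 0 < (z:ℂ).im from max_lt hz z.2)] with w hw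
  have hw : max A 0 < w.im := hw
  exact (hA ⟨w, (le_max_right _ _).trans_lt hw⟩ ((le_max_left _ _).trans hw.le)).1

lemma MF.inv {k : ℤ} {f : ℂ → ℂ} {v : ℍ → ℤ} {m : ℤ} (hf : MF k f v m) {z w : ℍ} (h : Eqv z w) :
    v z = v w := by
  obtain ⟨γ, rfl⟩ := h
  have e := meromorphicOrderAt_comp_smul (f := fun z : ℍ => f z) (τ := z) (g := (γ : GL (Fin 2) ℝ))
    (by
      have : (γ : GL (Fin 2) ℝ).val.det = 1 :=
        (Matrix.SpecialLinearGroup.map (Int.castRingHom ℝ) γ).2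
      rw [this]; exact one_pos)
  have c1 : (fun x : ℂ => f ((γ : GL (Fin 2) ℝ) • ofComplex x : ℍ)) =ᶠ[𝓝[≠] (z:ℂ)]
      (fun x => denom (γ : GL (Fin 2) ℝ) x ^ k) * f := by
    refine Filter.Eventually.filter_mono nhdsWithin_le_nhds ?_
    filter_upwards [isOpen_upperHalfPlaneSet.mem_nhds z.2] with x hx
    have := hf.aut γ ⟨x, hx⟩
    rw [ofComplex_apply_of_im_pos hx]
    exact this
  have c2 : (fun x : ℂ => f (ofComplex x)) =ᶠ[𝓝[≠] ((γ • z : ℍ):ℂ)] f := by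
    refine Filter.Eventually.filter_mono nhdsWithin_le_nhds ?_
    filter_upwards [isOpen_upperHalfPlaneSet.mem_nhds (γ • z : ℍ).2] with x hx
    rw [ofComplex_apply_of_im_pos hx]
  have an : AnalyticAt ℂ (fun x => denom (γ : GL (Fin 2) ℝ) x ^ k) z := by
    refine AnalyticAt.zpow ?_ (denom_ne_zero _ z)
    unfold denom
    fun_prop
  rw [meromorphicOrderAt_congr c1, meromorphicOrderAt_mul an.meromorphicAt (hf.mer z),
    ord_zero an (zpow_ne_zero _ (denom_ne_zero _ z)), zero_add] at e
  have e2 := meromorphicOrderAt_congr c2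
  have e3 := e.trans e2
  rw [hf.ord, hf.ord] at e3
  exact_mod_cast e3

lemma MF.finite {k : ℤ} {f : ℂ → ℂ} {v : ℍ → ℤ} {m : ℤ} (hf : MF k f v m) :
    {z | z ∈ ModularGroup.fd ∧ v z ≠ 0}.Finite := by
  obtain ⟨h, a, b, A, hA⟩ := hf.cusp_local
  by_contra hinf
  have hK := ModularGroup.isCompact_truncatedFundamentalDomain A
  obtain ⟨x, hx, hacc⟩ := Set.Infinite.exists_accPt_of_subset_isCompact hinf hK (by
    rintro z ⟨hz, hv⟩
    refine ⟨hz, ?_⟩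
    by_contra hlt
    obtain ⟨c1, c2, c3⟩ := hA z (not_le.mp hlt)
    apply hv
    have h1 := hf.ord z
    rw [meromorphicOrderAt_congr (Filter.Eventually.filter_mono nhdsWithin_le_nhds c3),
      ord_zero] at h1
    · exact_mod_cast h1.symm
    · exact ((nq_an z).zpow (nq_ne z)).mul (AnalyticAt.comp (g := h) c1 (nq_an z))
    · exact mul_ne_zero (zpow_ne_zero _ (nq_ne z)) c2)
  rw [accPt_iff_frequently_nhdsNE] at hacc
  have h1 := (hf.mer x).eventually_analyticAt
  have h2 := (meromorphicOrderAt_ne_top_iff_eventually_ne_zero (hf.mer x)).mp (by rw [hf.ord]; simp)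
  have ht : Tendsto (fun z : ℍ => (z:ℂ)) (𝓝[≠] x) (𝓝[≠] (x:ℂ)) :=
    ne_tendsto continuous_coe coe_inj' x
  obtain ⟨y, ⟨_, hy⟩, y1, y2⟩ := (hacc.and_eventually (ht.eventually (h1.and h2))).exists
  apply hy
  have h1 := hf.ord y
  rw [ord_zero y1 y2] at h1
  exact_mod_cast h1.symm

lemma MF.weight {k : ℤ} {f : ℂ → ℂ} (hf : MF k f 0 0) : k = 0 := by
  -- local analytic continuation
  have loc : ∀ p : ℍ, ∃ g : ℂ → ℂ, AnalyticAt ℂ g p ∧ g p ≠ 0 ∧ ∀ᶠ w in 𝓝[≠] (p:ℂ), f w = g w := by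
    intro p
    obtain ⟨g, a, b, c⟩ := (meromorphicOrderAt_eq_int_iff (hf.mer p)).mp (hf.ord p)
    exact ⟨g, a, b, by simpa using c⟩
  set F : ℂ → ℂ := fun z => limUnder (𝓝[≠] z) f with hF
  have hFeq : ∀ (z : ℂ) (g : ℂ → ℂ), ContinuousAt g z → (∀ᶠ w in 𝓝[≠] z, f w = g w) → F z = g z := by
    intro z g hg h
    apply Tendsto.limUnder_eq
    exact (hg.tendsto.mono_left nhdsWithin_le_nhds).congr' (h.mono fun w hw => hw.symm)
  have hFlim : ∀ z : ℍ, Tendsto f (𝓝[≠] (z:ℂ)) (𝓝 (F z)) := by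
    intro z
    obtain ⟨g, a, b, c⟩ := loc z
    rw [hFeq z g a.continuousAt c]
    exact (a.continuousAt.tendsto.mono_left nhdsWithin_le_nhds).congr' (c.mono fun w hw => hw.symm)
  have hFloc : ∀ p : ℍ, AnalyticAt ℂ F p ∧ F p ≠ 0 := by
    intro p
    obtain ⟨g, a, b, c⟩ := loc p
    have e : F =ᶠ[𝓝 (p:ℂ)] g := by
      rw [eventually_nhdsWithin_iff] at c
      filter_upwards [c.eventually_nhds, a.eventually_analyticAt] with w h1 h2
      refine hFeq w g h2.continuousAt ?_
      by_cases hw : w = p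
      · subst hw
        rw [eventually_nhdsWithin_iff]
        exact h1
      · have : ∀ᶠ y in 𝓝 w, y ≠ (p:ℂ) := isOpen_ne.mem_nhds hw
        exact Filter.Eventually.filter_mono nhdsWithin_le_nhds (by
          filter_upwards [h1, this] with y hy1 hy2
          exact hy1 hy2)
    exact ⟨a.congr e.symm, by rw [e.eq_of_nhds]; exact b⟩
  have hFaut : ∀ (γ : SL(2, ℤ)) (z : ℍ), F ((γ • z : ℍ) : ℂ) = denom γ z ^ k * F z := by
    intro γ z
    have ht : ∀ x : ℍ, Tendsto (fun z : ℍ => (z:ℂ)) (𝓝[≠] x) (𝓝[≠] (x:ℂ)) := fun x =>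
      ne_tendsto continuous_coe coe_inj' x
    have hγ : Tendsto (fun x : ℍ => γ • x) (𝓝[≠] z) (𝓝[≠] (γ • z)) := by
      exact ne_tendsto (continuous_const_smul (γ : GL (Fin 2) ℝ)) (MulAction.injective γ) z
    have l1 := (hFlim (γ • z)).comp ((ht _).comp hγ)
    have l2 : Tendsto (fun x : ℍ => denom γ x ^ k * f x) (𝓝[≠] z) (𝓝 (denom γ z ^ k * F z)) := by
      refine Tendsto.mul ?_ ((hFlim z).comp (ht z))
      refine Tendsto.mono_left ?_ nhdsWithin_le_nhds
      have : ContinuousAt (fun x : ℂ => denom (γ : GL (Fin 2) ℝ) x ^ k) z := by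
        refine ContinuousAt.zpow₀ ?_ _ (Or.inl (denom_ne_zero _ z))
        unfold denom
        fun_prop
      exact this.tendsto.comp continuous_coe.continuousAt
    refine tendsto_nhds_unique l1 (l2.congr fun x => ?_)
    exact (hf.aut γ x).symm
  obtain ⟨h, a, b, A, hA⟩ := hf.cusp_local
  have hFcusp : Tendsto (fun z : ℍ => F z) atImInfty (𝓝 (h 0)) := by
    refine (a.continuousAt.tendsto.comp nq_tendsto).congr' ?_
    rw [Filter.EventuallyEq, Filter.Eventually, atImInfty_mem]
    refine ⟨A + 1, fun z hz => ?_⟩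
    obtain ⟨c1, c2, c3⟩ := hA z (by linarith)
    refine (hFeq z (fun w => h (nq w)) ?_ ?_).symm
    · exact (AnalyticAt.comp (g := h) c1 (nq_an z)).continuousAt
    · exact (Filter.Eventually.filter_mono nhdsWithin_le_nhds c3).mono fun w hw => by simpa using hw
  have hmd : ∀ G : ℂ → ℂ, (∀ p : ℍ, AnalyticAt ℂ G p) → MDiff (fun z : ℍ => G z) := by
    intro G hG
    rw [UpperHalfPlane.mdifferentiable_iff]
    intro w hw
    refine DifferentiableAt.differentiableWithinAt ?_
    refine ((hG ⟨w, hw⟩).differentiableAt).congr_of_eventuallyEq ?_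
    filter_upwards [isOpen_upperHalfPlaneSet.mem_nhds hw] with x hx
    simp [ofComplex_apply_of_im_pos hx]
  obtain ⟨G, hG⟩ := mkForm (k := k) (fun z : ℍ => F z)
    (fun γ => slash_of_aut _ _ fun z => hFaut γ z) (hmd F fun p => (hFloc p).1)
    (hFcusp.isBigO_one _)
  obtain ⟨G', hG'⟩ := mkForm (k := -k) (fun z : ℍ => F⁻¹ z)
    (fun γ => slash_of_aut _ _ fun z => by
      simp only [Pi.inv_apply]
      rw [hFaut, mul_inv, zpow_neg])
    (hmd F⁻¹ fun p => (hFloc p).1.inv (hFloc p).2)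
    ((hFcusp.inv₀ b).isBigO_one _)
  rcases lt_trichotomy k 0 with hk | hk | hk
  · have := ModularFormClass.levelOne_neg_weight_eq_zero hk G
    rw [hG] at this
    exact absurd (congrFun this ρ) (hFloc ρ).2
  · exact hk
  · have := ModularFormClass.levelOne_neg_weight_eq_zero (neg_lt_zero.mpr hk) G'
    rw [hG'] at this
    exact absurd (congrFun this ρ) (inv_ne_zero (hFloc ρ).2)

end
end Val

namespace Val
open UpperHalfPlane ModularForm EisensteinSeries Derivative
open scoped Manifold
noncomputable section

lemma jj_iff (z w : ℍ) : jj z = jj w ↔ Eqv z w := ⟨jj_inj, Eqv.jj⟩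

lemma E4_iff (z : ℍ) : E₄ z = 0 ↔ Eqv z ρ := by rw [← jj_iff, jj_rho, jj_eq_zero]
lemma E6_iff (z : ℍ) : E₆ z = 0 ↔ Eqv z UpperHalfPlane.I := by rw [← jj_iff, jj_I, jj_eq_1728]

lemma rho_not_I : ¬ Eqv ρ UpperHalfPlane.I := by
  rw [← jj_iff, jj_rho, jj_I]; norm_num

theorem MF.main {k : ℤ} {f : ℂ → ℂ} {v : ℍ → ℤ} {n : ℤ} (hf : MF k f v n) (T : Finset ℍ)
    (h1 : ∀ p ∈ T, ¬ Eqv p ρ) (h2 : ∀ p ∈ T, ¬ Eqv p UpperHalfPlane.I)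
    (h3 : ∀ p ∈ T, ∀ q ∈ T, Eqv p q → p = q)
    (h4 : ∀ z, v z ≠ 0 → Eqv z ρ ∨ Eqv z UpperHalfPlane.I ∨ ∃ p ∈ T, Eqv z p) :
    12 * n + 6 * v UpperHalfPlane.I + 4 * v ρ + 12 * ∑ p ∈ T, v p = k := by
  classical
  have e4 := (MF.form E₄ (by rw [cusp_E4]; exact one_ne_zero) E4_simple).zpow (-v ρ)
  have e6 := (MF.form E₆ (by rw [cusp_E6]; exact one_ne_zero) E6_simple).zpow (-v UpperHalfPlane.I)
  have ed := MF.disc.zpow (-(n + ∑ p ∈ T, v p))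
  have ep := MF.prod T _ _ _ _ (fun p hp => (MF.jj (Val.jj p)
    (by rw [← jj_rho, Ne, jj_iff]; exact h1 p hp)
    (by rw [← jj_I, Ne, jj_iff]; exact h2 p hp)).zpow (-v p))
  have tot := (((hf.mul e4).mul e6).mul ed).mul ep
  have hv : v + (fun p => -v ρ * if E₄ p = 0 then 1 else 0) +
      (fun p => -v UpperHalfPlane.I * if E₆ p = 0 then 1 else 0) +
      (fun p => -(n + ∑ p ∈ T, v p) * (0 : ℍ → ℤ) p) +
      (∑ i ∈ T, fun p => -v i * if Val.jj p = Val.jj i then 1 else 0) = 0 := by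
    funext z
    simp only [Pi.add_apply, Finset.sum_apply, Pi.zero_apply, E4_iff, E6_iff, jj_iff, mul_zero, add_zero]
    by_cases a : Eqv z ρ
    · have b : ¬ Eqv z UpperHalfPlane.I := fun b => rho_not_I (a.symm.trans b)
      rw [if_pos a, if_neg b, Finset.sum_eq_zero, hf.inv a]
      · ring
      · intro p hp
        rw [if_neg (fun c => h1 p hp (c.symm.trans a)), mul_zero]
    · by_cases b : Eqv z UpperHalfPlane.I
      · rw [if_neg a, if_pos b, Finset.sum_eq_zero, hf.inv b]
        · ring
        · intro p hp
          rw [if_neg (fun c => h2 p hp (c.symm.trans b)), mul_zero]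
      · rw [if_neg a, if_neg b]
        by_cases c : ∃ p ∈ T, Eqv z p
        · obtain ⟨p, hp, c⟩ := c
          rw [Finset.sum_eq_single_of_mem p hp, if_pos c, hf.inv c]
          · ring
          · intro q hq hqp
            rw [if_neg (fun d => hqp (h3 q hq p hp (d.symm.trans c))), mul_zero]
        · have hz : v z = 0 := by
            by_contra h
            rcases h4 z h with h5 | h5 | h5
            · exact a h5
            · exact b h5
            · exact c h5
          rw [Finset.sum_eq_zero, hz]
          · ring
          · intro p hp
            rw [if_neg (fun d => c ⟨p, hp, d⟩), mul_zero]
  have hn : n + -v ρ * 0 + -v UpperHalfPlane.I * 0 + -(n + ∑ p ∈ T, v p) * 1 + ∑ i ∈ T, -v i * -1 = 0 := by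
    simp
  rw [hv, hn] at tot
  have := tot.weight
  simp at this
  linarith

lemma rho_eq : Complex.exp (2 * π * Complex.I / 3) = (ρ : ℂ) := by
  rw [show 2 * (π:ℂ) * Complex.I / 3 = ((π - π / 3 : ℝ) : ℂ) * Complex.I by push_cast; ring,
    Complex.exp_mul_I, ← Complex.ofReal_cos, ← Complex.ofReal_sin, Real.cos_pi_sub, Real.sin_pi_sub,
    Real.cos_pi_div_three, Real.sin_pi_div_three]
  apply Complex.ext
  · simp [ρ]; norm_num
  · simp [ρ]

lemma moeb (γ : SL(2, ℤ)) (z : ℍ) : ((γ • z : ℍ) : ℂ) =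
    (((γ : Matrix (Fin 2) (Fin 2) ℤ) 0 0 : ℂ) * z + ((γ : Matrix (Fin 2) (Fin 2) ℤ) 0 1 : ℂ)) /
          (((γ : Matrix (Fin 2) (Fin 2) ℤ) 1 0 : ℂ) * z + ((γ : Matrix (Fin 2) (Fin 2) ℤ) 1 1 : ℂ)) := by
  rw [UpperHalfPlane.coe_specialLinearGroup_apply]
  simp

end
end Val

/-- The valence formula for a nonzero meromorphic modular function `f` of weight `k`
for `SL(2, ℤ)`:
`v_∞(f) + (1/2)v_i(f) + (1/3)v_ρ(f) + Σ*′_p v_p(f) = k/12`,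
the sum running over representatives of the `SL(2, ℤ)`-orbits on `ℍ` other than those of
`i` and `ρ = e^{2πi/3}`.  The meromorphy of `f` on `ℍ` and at `∞`, and the fact that `f`
is not identically zero, are encoded by the data of the integer-valued local orders
`v p` (for `p ∈ ℍ`) and `vinf` (at `q = 0`). -/
theorem valence_formula
    (k : ℤ) (f : ℂ → ℂ)
    -- automorphy of weight `k` under `SL(2, ℤ)`
    (haut : ∀ γ : SL(2, ℤ), ∀ z ∈ upperH,
      f ((((γ : Matrix (Fin 2) (Fin 2) ℤ) 0 0 : ℂ) * z + ((γ : Matrix (Fin 2) (Fin 2) ℤ) 0 1 : ℂ)) /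
          (((γ : Matrix (Fin 2) (Fin 2) ℤ) 1 0 : ℂ) * z + ((γ : Matrix (Fin 2) (Fin 2) ℤ) 1 1 : ℂ))) =
        (((γ : Matrix (Fin 2) (Fin 2) ℤ) 1 0 : ℂ) * z + ((γ : Matrix (Fin 2) (Fin 2) ℤ) 1 1 : ℂ)) ^ k * f z)
    -- `v p` is the (finite) order of `f` at each point `p` of the upper half-plane;
    -- in particular `f` is meromorphic and not identically zero near every point
    (v : ℂ → ℤ)
    (hord : ∀ p ∈ upperH, ∃ g : ℂ → ℂ, AnalyticAt ℂ g p ∧ g p ≠ 0 ∧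
      ∀ᶠ w in 𝓝[≠] p, f w = (w - p) ^ (v p) * g w)
    -- `f(z) = f̃(q)` with `q = e^{2πiz}`, and `vinf` is the order of `f̃` at `q = 0`
    (ftilde : ℂ → ℂ) (vinf : ℤ)
    (hcusp : ∀ z ∈ upperH, f z = ftilde (Complex.exp (2 * π * Complex.I * z)))
    (hordInf : ∃ h : ℂ → ℂ, AnalyticAt ℂ h 0 ∧ h 0 ≠ 0 ∧
      ∀ᶠ q in 𝓝[≠] (0 : ℂ), ftilde q = q ^ vinf * h q)
    -- `R` is a set of representatives of the orbits of `SL(2, ℤ)` on the upper half-plane,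
    -- containing `i` and `ρ = e^{2πi/3}`
    (R : Set ℂ) (hRH : R ⊆ upperH)
    (hrep : ∀ z ∈ upperH, ∃! w, w ∈ R ∧ ∃ γ : SL(2, ℤ),
      w = (((γ : Matrix (Fin 2) (Fin 2) ℤ) 0 0 : ℂ) * z + ((γ : Matrix (Fin 2) (Fin 2) ℤ) 0 1 : ℂ)) /
          (((γ : Matrix (Fin 2) (Fin 2) ℤ) 1 0 : ℂ) * z + ((γ : Matrix (Fin 2) (Fin 2) ℤ) 1 1 : ℂ)))
    (hiR : Complex.I ∈ R) (hρR : Complex.exp (2 * π * Complex.I / 3) ∈ R) :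
    (vinf : ℚ) + (1 / 2 : ℚ) * (v Complex.I : ℚ) +
        (1 / 3 : ℚ) * (v (Complex.exp (2 * π * Complex.I / 3)) : ℚ) +
        ∑ᶠ p ∈ R \ {Complex.I, Complex.exp (2 * π * Complex.I / 3)}, (v p : ℚ) =
      (k : ℚ) / 12 := by
  classical
  rw [Val.rho_eq] at hρR ⊢
  have hmf : Val.MF k f (fun z : UpperHalfPlane => v z) vinf := by
    refine ⟨fun γ z => ?_, fun p => ?_, fun p => ?_, ?_⟩
    · rw [Val.moeb, ModularGroup.denom_apply]
      exact haut γ z z.2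
    · obtain ⟨g, a, b, c⟩ := hord p p.2
      have : MeromorphicAt (fun w : ℂ => (w - p) ^ (v p) * g w) p :=
        (((MeromorphicAt.id _).sub (MeromorphicAt.const _ _)).zpow _).mul a.meromorphicAt
      exact this.congr (c.mono fun w hw => hw.symm)
    · obtain ⟨g, a, b, c⟩ := hord p p.2
      have : MeromorphicAt (fun w : ℂ => (w - p) ^ (v p) * g w) p :=
        (((MeromorphicAt.id _).sub (MeromorphicAt.const _ _)).zpow _).mul a.meromorphicAt
      exact (meromorphicOrderAt_eq_int_iff (this.congr (c.mono fun w hw => hw.symm))).mpr ⟨g, a, b, c⟩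
    · obtain ⟨h, a, b, c⟩ := hordInf
      refine ⟨h, a, b, ?_⟩
      have ht : Tendsto (fun z : UpperHalfPlane => Val.nq z) UpperHalfPlane.atImInfty (𝓝[≠] 0) :=
        tendsto_nhdsWithin_iff.mpr ⟨Val.nq_tendsto, Eventually.of_forall fun z => Val.nq_ne z⟩
      filter_upwards [ht.eventually c] with z hz
      rw [← hz, hcusp z z.2]
      simp [Val.nq, Function.Periodic.qParam]
  have hc : ∀ z : UpperHalfPlane, UpperHalfPlane.ofComplex (z : ℂ) = z := UpperHalfPlane.ofComplex_apply
  have hc' : ∀ p ∈ R, ((UpperHalfPlane.ofComplex p : UpperHalfPlane) : ℂ) = p := by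
    intro p hp
    rw [UpperHalfPlane.ofComplex_apply_of_im_pos (hRH hp)]
  have hR : ∀ p ∈ R, ∀ q ∈ R, Val.Eqv (UpperHalfPlane.ofComplex p) (UpperHalfPlane.ofComplex q) → p = q := by
    rintro p hp q hq ⟨γ, hγ⟩
    refine (hrep p (hRH hp)).unique ⟨hp, 1, by simp⟩ ⟨hq, γ, ?_⟩
    rw [← hc' q hq, ← hγ, Val.moeb, hc' p hp]
  set TR : Set ℂ := {p | p ∈ R \ {Complex.I, (UpperHalfPlane.ρ : ℂ)} ∧ v p ≠ 0} with hTR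
  have hfin : TR.Finite := by
    choose γ hγ using ModularGroup.exists_smul_mem_fd
    refine Set.Finite.of_injOn (f := fun p : ℂ => γ (UpperHalfPlane.ofComplex p) • UpperHalfPlane.ofComplex p)
      ?_ ?_ hmf.finite
    · rintro p ⟨hp, hv⟩
      refine ⟨hγ _, ?_⟩
      have := hmf.inv (z := UpperHalfPlane.ofComplex p) ⟨γ (UpperHalfPlane.ofComplex p), rfl⟩
      rw [← this, hc' p hp.1]
      exact hv
    · rintro p ⟨hp, -⟩ q ⟨hq, -⟩ h
      exact hR p hp.1 q hq.1 (Val.Eqv.trans ⟨_, h⟩ (Val.Eqv.symm ⟨_, rfl⟩))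
  have hinj : Set.InjOn UpperHalfPlane.ofComplex (hfin.toFinset : Set ℂ) := by
    intro p hp q hq h
    simp only [Set.Finite.coe_toFinset] at hp hq
    rw [← hc' p hp.1.1, ← hc' q hq.1.1, h]
  have hsum : ∑ᶠ p ∈ R \ {Complex.I, (UpperHalfPlane.ρ : ℂ)}, (v p : ℚ) = ∑ p ∈ hfin.toFinset, (v p : ℚ) := by
    apply finsum_mem_eq_sum_of_inter_support_eq
    ext p
    simp [hTR]
  have hsum2 : ∑ p ∈ hfin.toFinset.image UpperHalfPlane.ofComplex, v p = ∑ p ∈ hfin.toFinset, v p := by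
    rw [Finset.sum_image hinj]
    refine Finset.sum_congr rfl fun p hp => ?_
    rw [hc' p ((Set.Finite.mem_toFinset _).mp hp).1.1]
  have hmain := hmf.main (hfin.toFinset.image UpperHalfPlane.ofComplex) (by
      intro p hp h
      obtain ⟨q, hq, rfl⟩ := Finset.mem_image.mp hp
      have hq := (Set.Finite.mem_toFinset _).mp hq
      refine hq.1.2 (Or.inr (hR q hq.1.1 _ hρR ?_))
      rwa [hc]) (by
      intro p hp h
      obtain ⟨q, hq, rfl⟩ := Finset.mem_image.mp hp
      have hq := (Set.Finite.mem_toFinset _).mp hq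
      refine hq.1.2 (Or.inl (hR q hq.1.1 _ hiR ?_))
      rwa [← UpperHalfPlane.coe_I, hc]) (by
      intro p hp p' hp' h
      obtain ⟨q, hq, rfl⟩ := Finset.mem_image.mp hp
      obtain ⟨q', hq', rfl⟩ := Finset.mem_image.mp hp'
      have hq := (Set.Finite.mem_toFinset _).mp hq
      have hq' := (Set.Finite.mem_toFinset _).mp hq'
      rw [hR q hq.1.1 q' hq'.1.1 h]) (by
      intro z hz
      obtain ⟨w, ⟨hw, γ, hγ⟩, -⟩ := hrep z z.2
      rw [← Val.moeb] at hγ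
      have he : Val.Eqv z (UpperHalfPlane.ofComplex w) := ⟨γ, by rw [hγ, hc]⟩
      by_cases h1 : w = Complex.I
      · right; left
        rwa [h1, ← UpperHalfPlane.coe_I, hc] at he
      by_cases h2 : w = UpperHalfPlane.ρ
      · left
        rwa [h2, hc] at he
      right; right
      refine ⟨_, Finset.mem_image_of_mem _ ((Set.Finite.mem_toFinset _).mpr ⟨⟨hw, ?_⟩, ?_⟩), he⟩
      · rintro (h | h)
        · exact h1 h
        · exact h2 h
      · have := hmf.inv he
        rw [hc' w hw] at this
        rw [← this]; exact hz)
  rw [hsum2, UpperHalfPlane.coe_I] at hmain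
  rw [hsum]
  have hq : ((12 * vinf + 6 * v Complex.I + 4 * v UpperHalfPlane.ρ + 12 * ∑ p ∈ hfin.toFinset, v p : ℤ) : ℚ) = (k : ℚ) := by
    rw [hmain]
  push_cast at hq
  linarith
end

section
/- For every integer k, multiplication by Δ(z) = q·Π_{m≥1}(1−q^m)^{24} defines a linear isomorphism from the space 𝓜_{k−12}(Γ(1)) of modular forms of weight k−12 for SL(2,ℤ) onto the space 𝓢_k(Γ(1)) of cusp forms of weight k for SL(2,ℤ). -/
open UpperHalfPlane Complex Real

theorem mul_Delta_aux (G : Subgroup (GL (Fin 2) ℝ)) [G.HasDetOne]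
    (hG : G = (Matrix.SpecialLinearGroup.mapGL ℝ : Matrix.SpecialLinearGroup (Fin 2) ℤ →* _).range)
    (k : ℤ) :
    ∃ L : ModularForm G (k - 12) ≃ₗ[ℂ] CuspForm G k,
      ∀ (f : ModularForm G (k - 12)) (z : UpperHalfPlane), (L f) z = Delta z * f z := by
  subst hG
  refine ⟨CuspForm.discriminantEquiv.symm, fun f z => ?_⟩
  rw [Delta_eq_discriminant]
  rfl

/-- Multiplication by `Δ` is a linear isomorphism from the modular forms of weight `k - 12`
for `SL(2, ℤ)` onto the cusp forms of weight `k` for `SL(2, ℤ)`. -/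
theorem mul_Delta_linearEquiv (k : ℤ) :
    ∃ L : ModularForm (CongruenceSubgroup.Gamma 1) (k - 12) ≃ₗ[ℂ]
        CuspForm (CongruenceSubgroup.Gamma 1) k,
      ∀ (f : ModularForm (CongruenceSubgroup.Gamma 1) (k - 12)) (z : UpperHalfPlane),
        (L f) z = Delta z * f z := by
  refine mul_Delta_aux _ ?_ k
  rw [CongruenceSubgroup.Gamma_one_top, ← MonoidHom.range_eq_map]
end

section
/- For the spaces 𝓜_k(Γ(1)) of modular forms and 𝓢_k(Γ(1)) of cusp forms of weight k for SL(2,ℤ): dim 𝓜_k(Γ(1)) = ⌊k/12⌋ if k ≡ 2 (mod 12) and k ≥ 0; dim 𝓜_k(Γ(1)) = 0 if k is odd; dim 𝓜_k(Γ(1)) = ⌊k/12⌋ + 1 if k is even, k ≥ 0 and k ≢ 2 (mod 12). Similarly, dim 𝓢_k(Γ(1)) = ⌊k/12⌋ − 1 if k ≡ 2 (mod 12) and k ≥ 12; dim 𝓢_k(Γ(1)) = 0 if k is odd; dim 𝓢_k(Γ(1)) = ⌊k/12⌋ if k is even, k ≥ 0 and k ≢ 2 (mod 12). -/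
open UpperHalfPlane

theorem levelOne_map_Gamma_one :
    ((CongruenceSubgroup.Gamma 1 : Subgroup (Matrix.SpecialLinearGroup (Fin 2) ℤ)) :
      Subgroup (Matrix.GeneralLinearGroup (Fin 2) ℝ)) =
      (Matrix.SpecialLinearGroup.mapGL ℝ : Matrix.SpecialLinearGroup (Fin 2) ℤ →* _).range := by
  rw [CongruenceSubgroup.Gamma_one_top, MonoidHom.range_eq_map]

theorem finrank_modularForm_congr {G H : Subgroup (Matrix.GeneralLinearGroup (Fin 2) ℝ)}
    [G.HasDetOne] [H.HasDetOne] (h : G = H) (k : ℤ) :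
    Module.finrank ℂ (ModularForm G k) = Module.finrank ℂ (ModularForm H k) := by
  subst h; rfl

theorem finrank_cuspForm_congr {G H : Subgroup (Matrix.GeneralLinearGroup (Fin 2) ℝ)}
    [G.HasDetOne] [H.HasDetOne] (h : G = H) (k : ℤ) :
    Module.finrank ℂ (CuspForm G k) = Module.finrank ℂ (CuspForm H k) := by
  subst h; rfl

open MatrixGroups in
theorem finrank_modularForm_even (k : ℤ) (h0 : 0 ≤ k) (hk : Even k) :
    Module.finrank ℂ (ModularForm 𝒮ℒ k) =
      if k % 12 = 2 then (k / 12).toNat else (k / 12).toNat + 1 := by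
  lift k to ℕ using h0
  have hk' : Even k := by exact_mod_cast hk
  have e := ModularForm.dimension_level_one k hk'
  apply Module.finrank_eq_of_rank_eq
  rw [e]
  have h1 : ((k : ℤ) / 12).toNat = k / 12 := by omega
  rw [h1]
  have h2 : ((k : ℤ) % 12 = 2) ↔ k ≡ 2 [MOD 12] := by
    unfold Nat.ModEq; omega
  simp only [h2]

/-- Dimension formulas for the spaces of modular forms and cusp forms of weight `k`
for `SL(2, ℤ)`:
`dim 𝓜_k = ⌊k/12⌋` if `k ≡ 2 (mod 12)`, `k ≥ 0`; `dim 𝓜_k = 0` for odd `k`;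
`dim 𝓜_k = ⌊k/12⌋ + 1` if `k` is even, `k ≥ 0`, `k ≢ 2 (mod 12)`; and similarly
`dim 𝓢_k = ⌊k/12⌋ - 1` if `k ≡ 2 (mod 12)`, `k ≥ 12`; `dim 𝓢_k = 0` for odd `k`;
`dim 𝓢_k = ⌊k/12⌋` if `k` is even, `k ≥ 0`, `k ≢ 2 (mod 12)`. -/
theorem levelOne_dimension_formulas (k : ℤ) :
    (0 ≤ k → k % 12 = 2 →
      Module.finrank ℂ (ModularForm (CongruenceSubgroup.Gamma 1) k) = (k / 12).toNat) ∧
    (Odd k →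
      Module.finrank ℂ (ModularForm (CongruenceSubgroup.Gamma 1) k) = 0) ∧
    (0 ≤ k → Even k → k % 12 ≠ 2 →
      Module.finrank ℂ (ModularForm (CongruenceSubgroup.Gamma 1) k) = (k / 12).toNat + 1) ∧
    (12 ≤ k → k % 12 = 2 →
      Module.finrank ℂ (CuspForm (CongruenceSubgroup.Gamma 1) k) = (k / 12).toNat - 1) ∧
    (Odd k →
      Module.finrank ℂ (CuspForm (CongruenceSubgroup.Gamma 1) k) = 0) ∧
    (0 ≤ k → Even k → k % 12 ≠ 2 →
      Module.finrank ℂ (CuspForm (CongruenceSubgroup.Gamma 1) k) = (k / 12).toNat) := by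
  have hodd : ∀ j : ℤ, Odd j →
      Module.finrank ℂ (ModularForm (Matrix.SpecialLinearGroup.mapGL ℝ :
        Matrix.SpecialLinearGroup (Fin 2) ℤ →* _).range j) = 0 := fun j hj =>
    Module.finrank_eq_of_rank_eq (by simpa using ModularForm.levelOne_odd_weight_rank_zero hj)
  have hneg : ∀ j : ℤ, j < 0 →
      Module.finrank ℂ (ModularForm (Matrix.SpecialLinearGroup.mapGL ℝ :
        Matrix.SpecialLinearGroup (Fin 2) ℤ →* _).range j) = 0 := fun j hj =>
    Module.finrank_eq_of_rank_eq (by simpa using ModularForm.levelOne_neg_weight_rank_zero hj)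
  rw [finrank_modularForm_congr levelOne_map_Gamma_one,
    finrank_cuspForm_congr levelOne_map_Gamma_one,
    (CuspForm.discriminantEquiv (k := k)).finrank_eq]
  refine ⟨fun h0 h => ?_, hodd k, fun h0 he h => ?_, fun h0 h => ?_, fun h => ?_,
    fun h0 he h => ?_⟩
  · rw [finrank_modularForm_even k h0 (by rw [Int.even_iff]; omega), if_pos h]
  · rw [finrank_modularForm_even k h0 he, if_neg h]
  · rw [finrank_modularForm_even (k - 12) (by omega) (by rw [Int.even_iff]; omega),
      if_pos (by omega)]
    omega
  · exact hodd _ (by rw [Int.odd_iff] at h ⊢; omega)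
  · by_cases h12 : k < 12
    · rw [hneg _ (by omega)]
      omega
    · rw [finrank_modularForm_even (k - 12) (by omega) (by rw [Int.even_iff] at he ⊢; omega),
        if_neg (by omega)]
      omega
end

section
/- (Kummer congruence.) Fix a prime p, an integer N ≥ 1, and an integer c > 1 with gcd(c,p) = 1. For an integer k ≥ 0, define ζ_{(p)}^{(c)}(−k) = (c^{k+1}−1)(1−p^k)·B_{k+1}/(k+1), where B_{k+1} is a Bernoulli number. If k, k′ ≥ 0 are integers with k ≡ k′ (mod (p−1)p^{N−1}), then ζ_{(p)}^{(c)}(−k) ≡ ζ_{(p)}^{(c)}(−k′) (mod p^N), i.e., the p-adic valuation of their difference is at least N. -/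
/-- The regularized zeta value
`ζ_{(p)}^{(c)}(-k) = (1 - c^{k+1})(1 - pᵏ)·ζ(-k) = (c^{k+1} - 1)(1 - pᵏ)·B_{k+1}/(k+1)`. -/
noncomputable def zetaReg (p c k : ℕ) : ℚ :=
  ((c : ℚ) ^ (k + 1) - 1) * (1 - (p : ℚ) ^ k) * bernoulli (k + 1) / (k + 1)

namespace KummerAux

open Filter Topology Finset

/-- Residues below `p ^ M` that are prime to `p`. -/
def resSet (p M : ℕ) : Finset ℕ := (range (p ^ M)).filter (fun a => ¬ p ∣ a)

/-- The Riemann sums for the regularized measure. -/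
def riemSum (p c k M : ℕ) : ℕ :=
  ∑ a ∈ resSet p M, (c * a / p ^ M) * (c * a % p ^ M) ^ k

lemma not_dvd_mod {p c M a : ℕ} (hp : p.Prime) (hcp : Nat.Coprime c p) (hM : 1 ≤ M)
    (ha : ¬ p ∣ a) : ¬ p ∣ c * a % p ^ M := by
  intro h
  have h2 : p ∣ c * a := (Nat.dvd_mod_iff (dvd_pow_self p (by omega : M ≠ 0))).1 h
  exact ha (Nat.Coprime.dvd_of_dvd_mul_left hcp.symm h2)

lemma sum_perm {p c M : ℕ} (hp : p.Prime) (hcp : Nat.Coprime c p) (hM : 1 ≤ M) (f : ℕ → ℕ) :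
    ∑ a ∈ resSet p M, f (c * a % p ^ M) = ∑ a ∈ resSet p M, f a := by
  have hinj : Set.InjOn (fun a => c * a % p ^ M) (resSet p M : Set ℕ) := by
    intro a ha b hb hab
    simp only [resSet, coe_filter, mem_range, Set.mem_ofPred_eq] at ha hb
    have h1 : c * a ≡ c * b [MOD p ^ M] := hab
    have h2 : a ≡ b [MOD p ^ M] :=
      Nat.ModEq.cancel_left_of_coprime (Nat.Coprime.pow_right M hcp).symm h1
    exact Nat.ModEq.eq_of_lt_of_lt h2 ha.1 hb.1
  have himg : (resSet p M).image (fun a => c * a % p ^ M) = resSet p M := by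
    apply Finset.eq_of_subset_of_card_le
    · intro x hx
      obtain ⟨a, ha, rfl⟩ := mem_image.1 hx
      simp only [resSet, mem_filter, mem_range] at ha ⊢
      exact ⟨Nat.mod_lt _ (pow_pos hp.pos M), not_dvd_mod hp hcp hM ha.2⟩
    · rw [card_image_of_injOn hinj]
  conv_rhs => rw [← himg]
  rw [sum_image hinj]

lemma key_identity {p c : ℕ} (hp : p.Prime) (hcp : Nat.Coprime c p) (k M : ℕ) (hM : 1 ≤ M) :
    ∃ Z : ℕ, c ^ (k + 1) * ∑ a ∈ resSet p M, a ^ (k + 1) =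
      ∑ a ∈ resSet p M, a ^ (k + 1) + (k + 1) * p ^ M * riemSum p c k M + (p ^ M) ^ 2 * Z := by
  have h : ∀ a : ℕ, ∃ z : ℕ, c ^ (k + 1) * a ^ (k + 1) = (c * a % p ^ M) ^ (k + 1) +
      (k + 1) * p ^ M * ((c * a / p ^ M) * (c * a % p ^ M) ^ k) + (p ^ M) ^ 2 * z := by
    intro a
    obtain ⟨z, hz⟩ := Polynomial.powAddExpansion (c * a % p ^ M) (p ^ M * (c * a / p ^ M)) (k + 1)
    refine ⟨z * (c * a / p ^ M) ^ 2, ?_⟩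
    rw [Nat.mod_add_div] at hz
    rw [← mul_pow, hz]
    simp only [Nat.add_sub_cancel]
    push_cast
    ring
  choose z hz using h
  refine ⟨∑ a ∈ resSet p M, z a, ?_⟩
  have hs := sum_perm hp hcp hM (fun a => a ^ (k + 1))
  rw [mul_sum, sum_congr rfl fun a _ => hz a, sum_add_distrib, sum_add_distrib, hs, riemSum,
    mul_sum, mul_sum]

lemma split_sum {p : ℕ} (hp : p.Prime) (n M : ℕ) :
    ∑ a ∈ range (p ^ (M + 1)), a ^ n =
      ∑ a ∈ resSet p (M + 1), a ^ n + p ^ n * ∑ a ∈ range (p ^ M), a ^ n := by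
  rw [← sum_filter_add_sum_filter_not (range (p ^ (M + 1))) (fun a => ¬ p ∣ a), resSet]
  congr 1
  rw [mul_sum]
  symm
  refine sum_nbij (fun b => p * b) ?_ ?_ ?_ ?_
  · intro b hb
    simp only [mem_filter, mem_range, not_not] at hb ⊢
    refine ⟨?_, dvd_mul_right _ _⟩
    rw [pow_succ']
    exact Nat.mul_lt_mul_of_pos_left hb hp.pos
  · intro a _ b _ hab
    exact Nat.eq_of_mul_eq_mul_left hp.pos hab
  · intro x hx
    simp only [coe_filter, mem_range, not_not, Set.mem_ofPred_eq] at hx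
    obtain ⟨hx, b, rfl⟩ := hx
    refine ⟨b, ?_, rfl⟩
    rw [pow_succ'] at hx
    simpa using Nat.lt_of_mul_lt_mul_left hx
  · intro b _
    rw [mul_pow]

variable (p : ℕ) [hp : Fact p.Prime]

lemma tendsto_pow_p : Tendsto (fun M : ℕ => (p : ℚ_[p]) ^ M) atTop (𝓝 0) :=
  tendsto_pow_atTop_nhds_zero_of_norm_lt_one Padic.norm_p_lt_one

lemma p_ne : (p : ℚ_[p]) ≠ 0 := by exact_mod_cast hp.out.ne_zero

lemma tendsto_full (n : ℕ) :
    Tendsto (fun M : ℕ => (∑ a ∈ range (p ^ M), (a : ℚ_[p]) ^ n) / (p : ℚ_[p]) ^ M) atTop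
      (𝓝 ((bernoulli n : ℚ) : ℚ_[p])) := by
  let g : ℚ_[p] → ℚ_[p] := fun x => ∑ i ∈ range (n + 1),
    ((bernoulli i : ℚ) : ℚ_[p]) * ((n + 1).choose i : ℚ_[p]) * x ^ (n - i) / ((n : ℚ_[p]) + 1)
  have hn : ((n : ℚ_[p]) + 1) ≠ 0 := by exact_mod_cast Nat.succ_ne_zero n
  have hg0 : g 0 = ((bernoulli n : ℚ) : ℚ_[p]) := by
    simp only [g]
    rw [sum_range_succ, sum_eq_zero]
    · simp
      field_simp
    · intro i hi
      have : n - i ≠ 0 := by have := mem_range.1 hi; omega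
      simp [this]
  have hgc : Continuous g := by
    simp only [g]
    fun_prop
  have h := (hgc.tendsto 0).comp (tendsto_pow_p p)
  rw [hg0] at h
  refine h.congr fun M => ?_
  have hq := congrArg (fun x : ℚ => (x : ℚ_[p])) (sum_range_pow (p ^ M) n)
  push_cast at hq
  rw [hq, sum_div]
  simp only [g, Function.comp]
  refine sum_congr rfl fun i hi => ?_
  have hi' : n + 1 - i = (n - i) + 1 := by have := mem_range.1 hi; omega
  rw [hi', pow_succ ((p : ℚ_[p]) ^ M)]
  have := pow_ne_zero M (p_ne p)
  field_simp

lemma tendsto_res (k : ℕ) :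
    Tendsto (fun M : ℕ => (∑ a ∈ resSet p (M + 1), (a : ℚ_[p]) ^ (k + 1)) / (p : ℚ_[p]) ^ (M + 1))
      atTop (𝓝 ((1 - (p : ℚ_[p]) ^ k) * ((bernoulli (k + 1) : ℚ) : ℚ_[p]))) := by
  have h1 := (tendsto_add_atTop_iff_nat 1).2 (tendsto_full p (k + 1))
  have h2 := (tendsto_full p (k + 1)).const_mul ((p : ℚ_[p]) ^ k)
  have h3 := h1.sub h2
  rw [sub_mul, one_mul]
  refine h3.congr fun M => ?_
  have hs := congrArg (fun x : ℕ => (x : ℚ_[p])) (split_sum hp.out (k + 1) M)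
  push_cast at hs
  rw [hs]
  have := p_ne p
  field_simp
  ring

lemma tendsto_riem (c k : ℕ) (hcp : Nat.Coprime c p) :
    Tendsto (fun M : ℕ => (riemSum p c k (M + 1) : ℚ_[p])) atTop
      (𝓝 ((zetaReg p c k : ℚ) : ℚ_[p])) := by
  choose Z hZ using fun M : ℕ => key_identity hp.out hcp k (M + 1) (by omega)
  have hk : ((k : ℚ_[p]) + 1) ≠ 0 := by exact_mod_cast Nat.succ_ne_zero k
  have hZ0 : Tendsto (fun M : ℕ => (p : ℚ_[p]) ^ (M + 1) * (Z M : ℚ_[p])) atTop (𝓝 0) := by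
    have h1 := ((tendsto_add_atTop_iff_nat 1).2 (tendsto_pow_p p)).norm
    rw [norm_zero] at h1
    refine squeeze_zero_norm (fun M => ?_) h1
    rw [norm_mul]
    have : ‖(Z M : ℚ_[p])‖ ≤ 1 := by exact_mod_cast Padic.norm_int_le_one (p := p) (Z M : ℤ)
    exact mul_le_of_le_one_right (norm_nonneg _) this
  have h := ((((tendsto_res p k).const_mul ((c : ℚ_[p]) ^ (k + 1) - 1)).sub hZ0).div_const
    ((k : ℚ_[p]) + 1))
  have hz : ((zetaReg p c k : ℚ) : ℚ_[p]) = (((c : ℚ_[p]) ^ (k + 1) - 1) *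
      ((1 - (p : ℚ_[p]) ^ k) * ((bernoulli (k + 1) : ℚ) : ℚ_[p])) - 0) / ((k : ℚ_[p]) + 1) := by
    simp only [zetaReg]
    push_cast
    ring
  rw [hz]
  refine h.congr fun M => ?_
  have hs := congrArg (fun x : ℕ => (x : ℚ_[p])) (hZ M)
  push_cast at hs
  have hpM := pow_ne_zero (M + 1) (p_ne p)
  rw [div_eq_iff hk]
  rw [mul_div_assoc', sub_eq_iff_eq_add, div_eq_iff hpM]
  linear_combination hs

lemma pow_modEq {N k k' x : ℕ} (hN : 1 ≤ N) (hx : ¬ p ∣ x)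
    (h : k ≡ k' [MOD (p - 1) * p ^ (N - 1)]) : x ^ k ≡ x ^ k' [MOD p ^ N] := by
  have hco : Nat.Coprime x (p ^ N) :=
    Nat.Coprime.pow_right N ((Nat.Prime.coprime_iff_not_dvd hp.out).2 hx).symm
  have htot : Nat.totient (p ^ N) = (p - 1) * p ^ (N - 1) := by
    rw [Nat.totient_prime_pow hp.out (by omega), mul_comm]
  rw [← htot] at h
  wlog hle : k ≤ k' generalizing k k'
  · exact (this h.symm (by omega)).symm
  obtain ⟨t, ht⟩ := (Nat.modEq_iff_dvd' hle).1 h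
  obtain rfl : k' = k + Nat.totient (p ^ N) * t := by omega
  rw [pow_add, pow_mul]
  have h1 := ((Nat.ModEq.pow_totient hco).pow t).mul_left (x ^ k)
  simpa using h1.symm

lemma riem_congr {N c k k' : ℕ} (hN : 1 ≤ N) (hcp : Nat.Coprime c p)
    (h : k ≡ k' [MOD (p - 1) * p ^ (N - 1)]) (M : ℕ) :
    riemSum p c k (M + 1) ≡ riemSum p c k' (M + 1) [MOD p ^ N] := by
  unfold riemSum
  refine Nat.ModEq.sum fun a ha => ?_
  simp only [resSet, mem_filter] at ha
  exact (pow_modEq p hN (not_dvd_mod hp.out hcp (by omega) ha.2) h).mul_left _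

end KummerAux

/-- The Kummer congruence: if `k ≡ k′ (mod (p-1)p^{N-1})` then
`ζ_{(p)}^{(c)}(-k) ≡ ζ_{(p)}^{(c)}(-k′) (mod p^N)`, i.e. the difference has `p`-adic
valuation at least `N` (`p`-adic norm at most `p^{-N}`). -/
theorem kummer_congruence (p : ℕ) [Fact p.Prime] (N : ℕ) (hN : 1 ≤ N)
    (c : ℕ) (hc : 1 < c) (hcp : Nat.Coprime c p)
    (k k' : ℕ) (hcong : k ≡ k' [MOD (p - 1) * p ^ (N - 1)]) :
    ‖((zetaReg p c k - zetaReg p c k' : ℚ) : ℚ_[p])‖ ≤ (p : ℝ) ^ (-(N : ℤ)) := by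
  have h := ((KummerAux.tendsto_riem p c k hcp).sub (KummerAux.tendsto_riem p c k' hcp)).norm
  rw [Rat.cast_sub]
  refine le_of_tendsto' h fun M => ?_
  have hm := (Nat.modEq_iff_dvd.1 (KummerAux.riem_congr p hN hcp hcong M).symm)
  have := (Padic.norm_int_le_pow_iff_dvd (p := p)
    ((KummerAux.riemSum p c k (M + 1) : ℤ) - (KummerAux.riemSum p c k' (M + 1) : ℤ)) N).2
    (by exact_mod_cast hm)
  exact_mod_cast this
end
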